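/- The elliptic curve Y² = X³ − 21151030877616·X + 31685265497576201600 over ℚ has a rational point of infinite order. -/

import Mathlib

/-!
The witness is not integral at `41`, so by the Lutz-Nagell theorem it is not a torsion point.

Integrality of torsion is proved with the filtration of the formal group. Let `v` be a valuation
for which the coefficients of `Y² = X³ + a₂X² + a₄X + a₆` are integral. If a line `Y = ℓX + n`
meets the curve in two points with `v x ≥ γ > 1`, then `v ℓ` is small against `v n` and `v n ^ 2` is
at least `γ ^ 3`; Vieta's formulas then show that the third point is as close to infinity as the
other two and that the parameters `x / y` of the three points add up to something of valuation at
most `1 / v n`. Thus `x / y` is additive up to an error whose square has valuation at most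
`1 / γ ^ 3`, whereas `(x / y) ^ 2` has valuation `1 / v x`. A point near infinity of prime order `q`
therefore forces `v q * v x ≤ 1`. For the `p`-adic valuation this is impossible, since
`v y ^ 2 = v x ^ 3` makes `v x` an even power of `p`.
-/

open WeierstrassCurve

variable {K Γ₀ : Type*} [Field K] [LinearOrderedCommGroupWithZero Γ₀]

section Line

/-- The line `Y = ℓX + n` meets `Y² = X³ + a₂X² + a₄X + a₆` in points with abscissae `x₁`, `x₂`,
`x₃`, counted with multiplicity. This is encoded by Vieta's formulas for the resulting monic cubic;
`a₁` and `a₃` are ignored, so the notion is meaningful only when they vanish. -/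
structure IsLineSection (W : Affine K) (ℓ n x₁ x₂ x₃ : K) : Prop where
  sum_eq : x₁ + x₂ + x₃ = ℓ ^ 2 - W.a₂
  sum_mul_eq : x₁ * x₂ + x₁ * x₃ + x₂ * x₃ = W.a₄ - 2 * ℓ * n
  prod_eq : x₁ * x₂ * x₃ = n ^ 2 - W.a₆

variable {W : Affine K} {ℓ n x₁ x₂ x₃ y₁ y₂ : K}

namespace IsLineSection

lemma rotate (h : IsLineSection W ℓ n x₁ x₂ x₃) : IsLineSection W ℓ n x₂ x₃ x₁ where
  sum_eq := by linear_combination h.sum_eq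
  sum_mul_eq := by linear_combination h.sum_mul_eq
  prod_eq := by linear_combination h.prod_eq

lemma prod_ordinates (h : IsLineSection W ℓ n x₁ x₂ x₃) :
    (ℓ * x₁ + n) * (ℓ * x₂ + n) * (ℓ * x₃ + n) =
      n ^ 3 - W.a₂ * ℓ * n ^ 2 + W.a₄ * ℓ ^ 2 * n - W.a₆ * ℓ ^ 3 := by
  linear_combination ℓ * n ^ 2 * h.sum_eq + ℓ ^ 2 * n * h.sum_mul_eq + ℓ ^ 3 * h.prod_eq

lemma sum_abscissa_mul_ordinates (h : IsLineSection W ℓ n x₁ x₂ x₃) :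
    x₁ * (ℓ * x₂ + n) * (ℓ * x₃ + n) + x₂ * (ℓ * x₃ + n) * (ℓ * x₁ + n) +
        x₃ * (ℓ * x₁ + n) * (ℓ * x₂ + n) =
      -(W.a₂ * n ^ 2) + 2 * W.a₄ * ℓ * n - 3 * W.a₆ * ℓ ^ 2 := by
  linear_combination n ^ 2 * h.sum_eq + 2 * ℓ * n * h.sum_mul_eq + 3 * ℓ ^ 2 * h.prod_eq

end IsLineSection

lemma slope_mul_add_intercept [DecidableEq K] (h₁ : W.Equation x₁ y₁) (h₂ : W.Equation x₂ y₂)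
    (hxy : ¬(x₁ = x₂ ∧ y₁ = W.negY x₂ y₂)) :
    W.slope x₁ x₂ y₁ y₂ * x₂ + (y₁ - W.slope x₁ x₂ y₁ y₂ * x₁) = y₂ := by
  rcases eq_or_ne x₁ x₂ with rfl | hx
  · rw [Affine.Y_eq_of_Y_ne h₁ h₂ rfl fun hy ↦ hxy ⟨rfl, hy⟩]
    ring
  · rw [Affine.slope_of_X_ne hx]
    field_simp [sub_ne_zero.mpr hx]
    ring

variable [W.IsCharNeTwoNF]

lemma equation_iff_of_isCharNeTwoNF {x y : K} :
    W.Equation x y ↔ y ^ 2 = x ^ 3 + W.a₂ * x ^ 2 + W.a₄ * x + W.a₆ := by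
  simp [Affine.equation_iff]

lemma IsLineSection.equation (h : IsLineSection W ℓ n x₁ x₂ x₃) :
    W.Equation x₁ (ℓ * x₁ + n) := by
  rw [equation_iff_of_isCharNeTwoNF]
  linear_combination -x₁ ^ 2 * h.sum_eq + x₁ * h.sum_mul_eq - h.prod_eq

lemma isLineSection_slope [DecidableEq K] (h₁ : W.Equation x₁ y₁) (h₂ : W.Equation x₂ y₂)
    (hxy : ¬(x₁ = x₂ ∧ y₁ = W.negY x₂ y₂)) :
    IsLineSection W (W.slope x₁ x₂ y₁ y₂) (y₁ - W.slope x₁ x₂ y₁ y₂ * x₁) x₁ x₂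
      (W.addX x₁ x₂ (W.slope x₁ x₂ y₁ y₂)) := by
  have hroots := Affine.addPolynomial_slope h₁ h₂ hxy
  rw [Affine.addPolynomial_eq, neg_inj, Cubic.prod_X_sub_C_eq, Cubic.toPoly_injective] at hroots
  obtain ⟨-, hsum, hmul, hprod⟩ := Cubic.mk.inj hroots
  simp only [a₁_of_isCharNeTwoNF, a₃_of_isCharNeTwoNF] at hsum hmul hprod
  constructor
  · linear_combination hsum
  · linear_combination -hmul
  · linear_combination hprod

end Line

section Valuation

variable {v : Valuation K Γ₀} {W : Affine K} {γ : Γ₀} {x y ℓ n x₁ x₂ x₃ : K}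

lemma valuation_one_add_mul {a c : K} (ha : v a < 1) (hc : c ∈ v.integer) : v (1 + a * c) = 1 :=
  v.map_one_add_of_lt <| by
    rw [map_mul]
    exact mul_lt_one_of_nonneg_of_lt_one_left zero_le ha hc

variable [IsIntegral v.integer W]

lemma a₂_mem_integer : W.a₂ ∈ v.integer :=
  integralModel_a₂_eq v.integer W ▸ (integralModel v.integer W).a₂.2

lemma a₄_mem_integer : W.a₄ ∈ v.integer :=
  integralModel_a₄_eq v.integer W ▸ (integralModel v.integer W).a₄.2

lemma a₆_mem_integer : W.a₆ ∈ v.integer :=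
  integralModel_a₆_eq v.integer W ▸ (integralModel v.integer W).a₆.2

namespace IsLineSection

lemma valuation_third_lt (h : IsLineSection W ℓ n x₁ x₂ x₃) (hℓ : 1 < v ℓ)
    (hx₁ : v x₁ = v ℓ ^ 2) (hx₂ : v x₂ = v ℓ ^ 2) (hn : v n < v ℓ ^ 3) : v x₃ < v ℓ ^ 2 := by
  have hprod : v (x₁ * x₂ * x₃) < v ℓ ^ 6 := by
    rw [h.prod_eq]
    refine v.map_sub_lt ?_ (lt_of_le_of_lt a₆_mem_integer (one_lt_pow₀ hℓ (by simp)))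
    rw [map_pow, pow_mul (v ℓ) 3 2]
    exact pow_lt_pow_left₀ hn zero_le two_ne_zero
  rw [map_mul, map_mul, hx₁, hx₂, ← pow_add, pow_add (v ℓ) 4 2] at hprod
  exact lt_of_mul_lt_mul_left' hprod

lemma valuation_slope_pow_three_le (h : IsLineSection W ℓ n x₁ x₂ x₃) (hℓ : 1 < v ℓ)
    (hx₁ : v x₁ = v ℓ ^ 2) (hx₂ : v x₂ = v ℓ ^ 2) : v ℓ ^ 3 ≤ v n := by
  by_contra! hn
  have hℓ₀ : 0 < v ℓ := zero_lt_one.trans hℓ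
  have hx₃ : v x₃ < v ℓ ^ 2 := h.valuation_third_lt hℓ hx₁ hx₂ hn
  have hmul : v (W.a₄ - 2 * ℓ * n - (x₁ + x₂) * x₃) < v ℓ ^ 4 := by
    refine v.map_sub_lt (v.map_sub_lt ?_ ?_) ?_
    · exact lt_of_le_of_lt a₄_mem_integer (one_lt_pow₀ hℓ four_ne_zero)
    · rw [mul_assoc, map_mul, map_mul, pow_succ' _ 3]
      exact (mul_le_of_le_one_left' (natCast_mem v.integer 2)).trans_lt
        (mul_lt_mul_of_pos_left hn hℓ₀)
    · rw [map_mul, pow_add (v ℓ) 2 2]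
      exact mul_lt_mul_of_le_of_lt_of_nonneg_of_pos (v.map_add_le hx₁.le hx₂.le) hx₃ zero_le
        (pow_pos hℓ₀ 2)
  rw [show W.a₄ - 2 * ℓ * n - (x₁ + x₂) * x₃ = x₁ * x₂ by linear_combination -h.sum_mul_eq,
    map_mul, hx₁, hx₂, ← pow_add] at hmul
  exact hmul.false

end IsLineSection

variable [W.IsCharNeTwoNF]

lemma valuation_ordinate_sq (h : W.Equation x y) (hx : 1 < v x) : v y ^ 2 = v x ^ 3 := by
  have hx₀ : x ≠ 0 := v.ne_zero_iff.mp (zero_lt_one.trans hx).ne'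
  have hinv : v x⁻¹ < 1 := by rwa [map_inv₀, inv_lt_one₀ (zero_lt_one.trans hx)]
  have hcoeff : W.a₂ + W.a₄ * x⁻¹ + W.a₆ * x⁻¹ ^ 2 ∈ v.integer :=
    add_mem (add_mem a₂_mem_integer (mul_mem a₄_mem_integer hinv.le))
      (mul_mem a₆_mem_integer (pow_mem hinv.le 2))
  have hfactor : y ^ 2 = x ^ 3 * (1 + x⁻¹ * (W.a₂ + W.a₄ * x⁻¹ + W.a₆ * x⁻¹ ^ 2)) := by
    rw [equation_iff_of_isCharNeTwoNF.mp h]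
    field_simp
    ring
  rw [← map_pow, hfactor, map_mul, valuation_one_add_mul hinv hcoeff, mul_one, map_pow]

lemma valuation_abscissa_div_ordinate_sq_mul (h : W.Equation x y) (hx : 1 < v x) :
    v (x / y) ^ 2 * v x = 1 := by
  have hx₀ : v x ≠ 0 := (zero_lt_one.trans hx).ne'
  rw [map_div₀, div_pow, valuation_ordinate_sq h hx, div_mul_eq_mul_div, ← pow_succ,
    div_self (pow_ne_zero 3 hx₀)]

lemma le_valuation_abscissa_of_pow_three_le (hγ : 1 < γ) (h : W.Equation x y)
    (hy : γ ^ 3 ≤ v y ^ 2) : γ ≤ v x := by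
  rcases le_or_gt (v x) 1 with hx | hx
  · have hy' : y ^ 2 ∈ v.integer := by
      rw [equation_iff_of_isCharNeTwoNF.mp h]
      exact add_mem (add_mem (add_mem (pow_mem hx 3) (mul_mem a₂_mem_integer (pow_mem hx 2)))
        (mul_mem a₄_mem_integer hx)) a₆_mem_integer
    rw [Valuation.mem_integer_iff, map_pow] at hy'
    exact absurd (hy.trans hy') (one_lt_pow₀ hγ three_ne_zero).not_ge
  · rw [valuation_ordinate_sq h hx] at hy
    exact (pow_le_pow_iff_left₀ zero_le zero_le three_ne_zero).mp hy

namespace IsLineSection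

lemma valuation_slope_sq (h : IsLineSection W ℓ n x₁ x₂ x₃) (hx₁ : 1 < v x₁)
    (hn : v n < v (ℓ * x₁)) : v ℓ ^ 2 = v x₁ := by
  have hy : v (ℓ * x₁ + n) ^ 2 = v x₁ ^ 3 := valuation_ordinate_sq h.equation hx₁
  rw [v.map_add_eq_of_lt_left hn, map_mul, mul_pow, pow_succ (v x₁) 2, mul_comm] at hy
  exact mul_left_cancel₀ (pow_ne_zero 2 (zero_lt_one.trans hx₁).ne') hy

lemma valuation_slope_mul_le (hγ : 1 < γ) (h : IsLineSection W ℓ n x₁ x₂ x₃)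
    (hx₁ : γ ≤ v x₁) (hx₂ : γ ≤ v x₂) : v ℓ * γ ≤ v n := by
  by_contra! hlt
  have hn {x : K} (hx : γ ≤ v x) : v n < v (ℓ * x) := by
    rw [map_mul]
    exact hlt.trans_le (mul_le_mul_right hx _)
  have hsq₁ : v ℓ ^ 2 = v x₁ := h.valuation_slope_sq (hγ.trans_le hx₁) (hn hx₁)
  have hsq₂ : v ℓ ^ 2 = v x₂ := h.rotate.valuation_slope_sq (hγ.trans_le hx₂) (hn hx₂)
  have hℓ : 1 < v ℓ := by
    rw [← one_lt_pow_iff_of_nonneg zero_le two_ne_zero, hsq₁]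
    exact hγ.trans_le hx₁
  have hcube : v n < v ℓ ^ 3 := by
    rw [pow_succ', hsq₁, ← map_mul]
    exact hn hx₁
  exact hcube.not_ge (h.valuation_slope_pow_three_le hℓ hsq₁.symm hsq₂.symm)

lemma pow_three_le_valuation_intercept_sq (hγ : 1 < γ) (h : IsLineSection W ℓ n x₁ x₂ x₃)
    (hx₁ : γ ≤ v x₁) (hx₂ : γ ≤ v x₂) : γ ^ 3 ≤ v n ^ 2 := by
  by_contra! hlt
  have hy : v n < v (ℓ * x₁ + n) := by
    refine lt_of_pow_lt_pow_left₀ 2 zero_le (hlt.trans_le ?_)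
    rw [valuation_ordinate_sq h.equation (hγ.trans_le hx₁)]
    exact pow_le_pow_left₀ zero_le hx₁ 3
  have hn : v n < v (ℓ * x₁) := by
    by_contra! hle
    exact hy.not_ge (v.map_add_le hle le_rfl)
  have hsq : γ ≤ v ℓ ^ 2 := by rwa [h.valuation_slope_sq (hγ.trans_le hx₁) hn]
  refine hlt.not_ge ?_
  calc γ ^ 3 = γ * γ ^ 2 := pow_succ' γ 2
    _ ≤ v ℓ ^ 2 * γ ^ 2 := mul_le_mul_left hsq _
    _ = (v ℓ * γ) ^ 2 := (mul_pow _ _ 2).symm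
    _ ≤ v n ^ 2 := pow_le_pow_left₀ zero_le (h.valuation_slope_mul_le hγ hx₁ hx₂) 2

lemma intercept_ne_zero (hγ : 1 < γ) (h : IsLineSection W ℓ n x₁ x₂ x₃)
    (hx₁ : γ ≤ v x₁) (hx₂ : γ ≤ v x₂) : n ≠ 0 := by
  rintro rfl
  have hle := h.pow_three_le_valuation_intercept_sq hγ hx₁ hx₂
  simp [(zero_lt_one.trans hγ).ne'] at hle

lemma le_valuation_third (hγ : 1 < γ) (h : IsLineSection W ℓ n x₁ x₂ x₃)
    (hx₁ : γ ≤ v x₁) (hx₂ : γ ≤ v x₂) : γ ≤ v x₃ := by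
  rcases le_or_gt (v n) (v (ℓ * x₃)) with hle | hlt
  · have hn : 0 < v n := v.pos_iff.mpr (h.intercept_ne_zero hγ hx₁ hx₂)
    rw [map_mul] at hle
    exact le_of_mul_le_mul_left ((h.valuation_slope_mul_le hγ hx₁ hx₂).trans hle)
      (pos_of_mul_pos_left (hn.trans_le hle) zero_le)
  · refine le_valuation_abscissa_of_pow_three_le hγ h.rotate.rotate.equation ?_
    rw [v.map_add_eq_of_lt_right hlt]
    exact h.pow_three_le_valuation_intercept_sq hγ hx₁ hx₂

lemma valuation_slope_div_intercept_lt_one (hγ : 1 < γ) (h : IsLineSection W ℓ n x₁ x₂ x₃)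
    (hx₁ : γ ≤ v x₁) (hx₂ : γ ≤ v x₂) : v (ℓ / n) < 1 := by
  rw [map_div₀, div_lt_one₀ (v.pos_iff.mpr (h.intercept_ne_zero hγ hx₁ hx₂))]
  rcases eq_or_ne ℓ 0 with rfl | hℓ
  · rw [map_zero]
    exact v.pos_iff.mpr (h.intercept_ne_zero hγ hx₁ hx₂)
  · exact (lt_mul_of_one_lt_right (v.pos_iff.mpr hℓ) hγ).trans_le
      (h.valuation_slope_mul_le hγ hx₁ hx₂)

lemma valuation_prod_ordinates (hγ : 1 < γ) (h : IsLineSection W ℓ n x₁ x₂ x₃)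
    (hx₁ : γ ≤ v x₁) (hx₂ : γ ≤ v x₂) :
    v ((ℓ * x₁ + n) * (ℓ * x₂ + n) * (ℓ * x₃ + n)) = v n ^ 3 := by
  have hn : n ≠ 0 := h.intercept_ne_zero hγ hx₁ hx₂
  have hslope : v (ℓ / n) < 1 := h.valuation_slope_div_intercept_lt_one hγ hx₁ hx₂
  have hcoeff : -W.a₂ + W.a₄ * (ℓ / n) - W.a₆ * (ℓ / n) ^ 2 ∈ v.integer :=
    sub_mem (add_mem (neg_mem a₂_mem_integer) (mul_mem a₄_mem_integer hslope.le))
      (mul_mem a₆_mem_integer (pow_mem hslope.le 2))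
  have hfactor : n ^ 3 - W.a₂ * ℓ * n ^ 2 + W.a₄ * ℓ ^ 2 * n - W.a₆ * ℓ ^ 3 =
      n ^ 3 * (1 + ℓ / n * (-W.a₂ + W.a₄ * (ℓ / n) - W.a₆ * (ℓ / n) ^ 2)) := by
    field_simp
    ring
  rw [h.prod_ordinates, hfactor, map_mul, valuation_one_add_mul hslope hcoeff, mul_one, map_pow]

lemma valuation_sum_abscissa_mul_ordinates_le (hγ : 1 < γ) (h : IsLineSection W ℓ n x₁ x₂ x₃)
    (hx₁ : γ ≤ v x₁) (hx₂ : γ ≤ v x₂) :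
    v (x₁ * (ℓ * x₂ + n) * (ℓ * x₃ + n) + x₂ * (ℓ * x₃ + n) * (ℓ * x₁ + n) +
      x₃ * (ℓ * x₁ + n) * (ℓ * x₂ + n)) ≤ v n ^ 2 := by
  have hn : n ≠ 0 := h.intercept_ne_zero hγ hx₁ hx₂
  have hslope : v (ℓ / n) < 1 := h.valuation_slope_div_intercept_lt_one hγ hx₁ hx₂
  have hcoeff : -W.a₂ + 2 * (W.a₄ * (ℓ / n)) - 3 * (W.a₆ * (ℓ / n) ^ 2) ∈ v.integer :=
    sub_mem (add_mem (neg_mem a₂_mem_integer)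
      (mul_mem (natCast_mem _ 2) (mul_mem a₄_mem_integer hslope.le)))
      (mul_mem (natCast_mem _ 3) (mul_mem a₆_mem_integer (pow_mem hslope.le 2)))
  have hfactor : -(W.a₂ * n ^ 2) + 2 * W.a₄ * ℓ * n - 3 * W.a₆ * ℓ ^ 2 =
      n ^ 2 * (-W.a₂ + 2 * (W.a₄ * (ℓ / n)) - 3 * (W.a₆ * (ℓ / n) ^ 2)) := by
    field_simp
  rw [h.sum_abscissa_mul_ordinates, hfactor, map_mul, map_pow]
  exact mul_le_of_le_one_right' hcoeff

lemma valuation_sum_div_sq_mul_le_one (hγ : 1 < γ) (h : IsLineSection W ℓ n x₁ x₂ x₃)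
    (hx₁ : γ ≤ v x₁) (hx₂ : γ ≤ v x₂) :
    v (x₁ / (ℓ * x₁ + n) + x₂ / (ℓ * x₂ + n) + x₃ / (ℓ * x₃ + n)) ^ 2 * γ ^ 3 ≤ 1 := by
  have hn : v n ≠ 0 := v.ne_zero_iff.mpr (h.intercept_ne_zero hγ hx₁ hx₂)
  have hprod := h.valuation_prod_ordinates hγ hx₁ hx₂
  have hne : (ℓ * x₁ + n) * (ℓ * x₂ + n) * (ℓ * x₃ + n) ≠ 0 :=
    v.ne_zero_iff.mp (hprod ▸ pow_ne_zero 3 hn)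
  obtain ⟨⟨hy₁, hy₂⟩, hy₃⟩ := by simpa only [mul_ne_zero_iff] using hne
  have hsum : v (x₁ / (ℓ * x₁ + n) + x₂ / (ℓ * x₂ + n) + x₃ / (ℓ * x₃ + n)) * v n ≤ 1 := by
    refine le_of_mul_le_mul_right ?_ (pow_pos (zero_lt_iff.mpr hn) 2)
    rw [one_mul, mul_assoc, ← pow_succ', ← hprod, ← map_mul]
    convert h.valuation_sum_abscissa_mul_ordinates_le hγ hx₁ hx₂ using 2
    rw [div_add_div _ _ hy₁ hy₂, div_add_div _ _ (mul_ne_zero hy₁ hy₂) hy₃, div_mul_cancel₀ _ hne]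
    ring
  refine (mul_le_mul_right (h.pow_three_le_valuation_intercept_sq hγ hx₁ hx₂) _).trans ?_
  rw [← mul_pow]
  exact pow_le_one₀ zero_le hsum

end IsLineSection

end Valuation

section Point

variable {W : Affine K}

/-- The uniformizer `x / y` at infinity, evaluated at a point; it differs by a sign from the usual
parameter of the formal group. At points with `y = 0` it takes the junk value `0`. -/
def formalParam : W.Point → K
  | .zero => 0
  | .some x y _ => x / y

@[simp]
lemma formalParam_zero : formalParam (0 : W.Point) = 0 := rfl

@[simp]
lemma formalParam_some {x y : K} (h : W.Nonsingular x y) : formalParam (.some x y h) = x / y := rfl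

/-- The `v`-adic neighbourhood of the point at infinity consisting of that point and of the affine
points with `γ ≤ v x`. -/
def nearInfinity (v : Valuation K Γ₀) (W : Affine K) (γ : Γ₀) : Set W.Point :=
  {P | ∀ ⦃x y h⦄, P = .some x y h → γ ≤ v x}

variable {v : Valuation K Γ₀} {γ : Γ₀}

lemma zero_mem_nearInfinity : (0 : W.Point) ∈ nearInfinity v W γ :=
  fun _ _ h h₀ ↦ (Affine.Point.some_ne_zero h h₀.symm).elim

lemma some_mem_nearInfinity {x y : K} {h : W.Nonsingular x y} :
    .some x y h ∈ nearInfinity v W γ ↔ γ ≤ v x :=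
  ⟨fun hP ↦ hP rfl, fun hx _ _ _ heq ↦ (Affine.Point.some.inj heq).1 ▸ hx⟩

variable [IsIntegral v.integer W] [W.IsCharNeTwoNF] [DecidableEq K]

lemma add_mem_nearInfinity (hγ : 1 < γ) {P Q : W.Point} (hP : P ∈ nearInfinity v W γ)
    (hQ : Q ∈ nearInfinity v W γ) : P + Q ∈ nearInfinity v W γ := by
  rcases P with _ | ⟨x₁, y₁, h₁⟩
  · rwa [← Affine.Point.zero_def, zero_add]
  rcases Q with _ | ⟨x₂, y₂, h₂⟩
  · rwa [← Affine.Point.zero_def, add_zero]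
  by_cases hxy : x₁ = x₂ ∧ y₁ = W.negY x₂ y₂
  · rw [Affine.Point.add_of_Y_eq hxy.1 hxy.2]
    exact zero_mem_nearInfinity
  · rw [Affine.Point.add_some hxy, some_mem_nearInfinity]
    exact (isLineSection_slope h₁.1 h₂.1 hxy).le_valuation_third hγ (hP rfl) (hQ rfl)

lemma valuation_formalParam_some_add_some_sub {x₁ y₁ x₂ y₂ : K} (hγ : 1 < γ)
    {h₁ : W.Nonsingular x₁ y₁} {h₂ : W.Nonsingular x₂ y₂} (hx₁ : γ ≤ v x₁) (hx₂ : γ ≤ v x₂)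
    (hxy : ¬(x₁ = x₂ ∧ y₁ = W.negY x₂ y₂)) :
    v (formalParam (.some x₁ y₁ h₁ + .some x₂ y₂ h₂) - (x₁ / y₁ + x₂ / y₂)) ^ 2 * γ ^ 3 ≤ 1 := by
  have h := (isLineSection_slope h₁.1 h₂.1 hxy).valuation_sum_div_sq_mul_le_one hγ hx₁ hx₂
  rw [slope_mul_add_intercept h₁.1 h₂.1 hxy, add_sub_cancel] at h
  convert h using 3
  rw [Affine.Point.add_some hxy, formalParam_some, v.map_sub_swap, sub_eq_add_neg, ← div_neg]
  congr 3
  simp only [Affine.addY, Affine.negAddY, Affine.negY, a₁_of_isCharNeTwoNF, a₃_of_isCharNeTwoNF]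
  ring

lemma valuation_formalParam_add_sub (hγ : 1 < γ) {P Q : W.Point} (hP : P ∈ nearInfinity v W γ)
    (hQ : Q ∈ nearInfinity v W γ) :
    v (formalParam (P + Q) - (formalParam P + formalParam Q)) ^ 2 * γ ^ 3 ≤ 1 := by
  rcases P with _ | ⟨x₁, y₁, h₁⟩
  · simp [← Affine.Point.zero_def]
  rcases Q with _ | ⟨x₂, y₂, h₂⟩
  · simp [← Affine.Point.zero_def]
  by_cases hxy : x₁ = x₂ ∧ y₁ = W.negY x₂ y₂
  · rw [Affine.Point.add_of_Y_eq hxy.1 hxy.2]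
    obtain ⟨rfl, rfl⟩ := hxy
    simp [div_neg]
  · exact valuation_formalParam_some_add_some_sub hγ (hP rfl) (hQ rfl) hxy

/-- The subgroup of `W` formed by `nearInfinity v W γ`: a step of the filtration of the formal group
of `W` at `v`, indexed by abscissae rather than by powers of the parameter. -/
def formalFiltration (v : Valuation K Γ₀) (W : Affine K) [IsIntegral v.integer W]
    [W.IsCharNeTwoNF] (hγ : 1 < γ) : AddSubgroup W.Point where
  carrier := nearInfinity v W γ
  zero_mem' := zero_mem_nearInfinity
  add_mem' := add_mem_nearInfinity hγ
  neg_mem' := by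
    rintro (_ | ⟨x, y, h⟩) hP
    · exact zero_mem_nearInfinity
    · exact some_mem_nearInfinity.mpr (hP rfl)

lemma some_mem_formalFiltration {x y : K} {h : W.Nonsingular x y} {hγ : 1 < γ} :
    .some x y h ∈ formalFiltration v W hγ ↔ γ ≤ v x :=
  some_mem_nearInfinity

lemma valuation_formalParam_nsmul_sub {hγ : 1 < γ} {P : W.Point}
    (hP : P ∈ formalFiltration v W hγ) (n : ℕ) :
    v (formalParam (n • P) - n * formalParam P) ^ 2 * γ ^ 3 ≤ 1 := by
  induction n with
  | zero => simp
  | succ n ih =>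
    have hadd := valuation_formalParam_add_sub hγ (nsmul_mem hP n) hP
    have hsplit : formalParam ((n + 1) • P) - (n + 1 : ℕ) * formalParam P =
        formalParam (n • P + P) - (formalParam (n • P) + formalParam P) +
          (formalParam (n • P) - n * formalParam P) := by
      rw [succ_nsmul]
      push_cast
      ring
    rw [hsplit]
    rcases le_max_iff.mp (v.map_add _ _) with hle | hle
    · exact (mul_le_mul_left (pow_le_pow_left₀ zero_le hle 2) _).trans hadd
    · exact (mul_le_mul_left (pow_le_pow_left₀ zero_le hle 2) _).trans ih

lemma nsmul_some_ne_zero {x y : K} (h : W.Nonsingular x y) (hx : 1 < v x) {n : ℕ}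
    (hn : 1 < v n * v x) : n • Affine.Point.some x y h ≠ 0 := by
  intro h₀
  have hbound : v (n * (x / y)) ^ 2 * v x ^ 3 ≤ 1 := by
    have := valuation_formalParam_nsmul_sub (some_mem_formalFiltration.mpr (le_refl (v x))
      : Affine.Point.some x y h ∈ formalFiltration v W hx) n
    rwa [h₀, formalParam_zero, formalParam_some, zero_sub, Valuation.map_neg] at this
  have hsq : v (n * (x / y)) ^ 2 * v x ^ 3 = (v n * v x) ^ 2 * (v (x / y) ^ 2 * v x) := by
    rw [map_mul, mul_pow, mul_pow, pow_succ (v x) 2, mul_mul_mul_comm]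
  rw [hsq, valuation_abscissa_div_ordinate_sq_mul h.1 hx, mul_one] at hbound
  exact hbound.not_gt (one_lt_pow₀ hn two_ne_zero)

theorem not_isOfFinAddOrder_some {x y : K} (h : W.Nonsingular x y) (hx : 1 < v x)
    (hprime : ∀ q : ℕ, q.Prime → 1 < v q * v x) :
    ¬IsOfFinAddOrder (Affine.Point.some x y h) := by
  intro hfin
  obtain ⟨q, hq, m, hm⟩ := Nat.exists_prime_and_dvd
    (AddMonoid.addOrderOf_eq_one_iff.not.mpr (Affine.Point.some_ne_zero h))
  have hm₀ : 0 < m := pos_of_mul_pos_right (hm ▸ hfin.addOrderOf_pos) q.zero_le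
  have hR₀ : m • Affine.Point.some x y h ≠ 0 :=
    nsmul_ne_zero_of_lt_addOrderOf hm₀.ne' (hm ▸ lt_mul_of_one_lt_left hm₀ hq.one_lt)
  have hqR : q • m • Affine.Point.some x y h = 0 := by
    rw [← mul_nsmul', ← hm, addOrderOf_nsmul_eq_zero]
  have hR : m • Affine.Point.some x y h ∈ formalFiltration v W hx :=
    nsmul_mem (some_mem_formalFiltration.mpr le_rfl) m
  generalize m • Affine.Point.some x y h = R at hR₀ hqR hR
  rcases R with _ | ⟨x', y', h'⟩
  · exact hR₀ rfl
  · have hx' : v x ≤ v x' := some_mem_formalFiltration.mp hR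
    exact nsmul_some_ne_zero h' (hx.trans_le hx')
      ((hprime q hq).trans_le (mul_le_mul_right hx' _)) hqR

end Point

section Rat

lemma isIntegral_padicValuation_integer (p : ℕ) [Fact p.Prime] (W : Affine ℚ) [IsIntegral ℤ W] :
    IsIntegral (Rat.padicValuation p).integer W := by
  have hint (a : ℤ) : ∃ r : (Rat.padicValuation p).integer, algebraMap _ ℚ r = algebraMap ℤ ℚ a :=
    ⟨⟨a, intCast_mem _ a⟩, rfl⟩
  refine isIntegral_of_exists_lift _ ?_ ?_ ?_ ?_ ?_
  · exact integralModel_a₁_eq ℤ W ▸ hint _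
  · exact integralModel_a₂_eq ℤ W ▸ hint _
  · exact integralModel_a₃_eq ℤ W ▸ hint _
  · exact integralModel_a₄_eq ℤ W ▸ hint _
  · exact integralModel_a₆_eq ℤ W ▸ hint _

variable {p : ℕ} [Fact p.Prime] {W : Affine ℚ} {x y : ℚ}

lemma padicValuation_natCast_eq_one {q : ℕ} (hq : q.Prime) (hqp : q ≠ p) :
    Rat.padicValuation p q = 1 := by
  have hndvd : ¬(p : ℤ) ∣ q := by
    rw [Int.natCast_dvd_natCast, Nat.prime_dvd_prime_iff_eq Fact.out hq]
    exact hqp.symm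
  rw [← Int.cast_natCast, Rat.padicValuation_cast]
  exact Int.padicValuation_eq_one_iff.mpr hndvd

lemma one_lt_padicValuation_self_mul [IsIntegral (Rat.padicValuation p).integer W]
    [W.IsCharNeTwoNF] (h : W.Equation x y) (hx : 1 < Rat.padicValuation p x) :
    1 < Rat.padicValuation p p * Rat.padicValuation p x := by
  have hx₀ : Rat.padicValuation p x ≠ 0 := (zero_lt_one.trans hx).ne'
  have hparity := congrArg WithZero.log (valuation_ordinate_sq h hx)
  simp only [WithZero.log_pow, nsmul_eq_mul, Nat.cast_ofNat] at hparity
  rw [← WithZero.exp_zero, ← WithZero.lt_log_iff_exp_lt hx₀] at hx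
  rw [Rat.padicValuation_self, ← WithZero.exp_log hx₀, ← WithZero.exp_add, ← WithZero.exp_zero,
    WithZero.exp_lt_exp]
  lia

theorem den_abscissa_eq_one_of_isOfFinAddOrder [IsIntegral ℤ W] [W.IsCharNeTwoNF]
    {h : W.Nonsingular x y} (hfin : IsOfFinAddOrder (Affine.Point.some x y h)) : x.den = 1 := by
  by_contra hden
  obtain ⟨p, hp, hdvd⟩ := Nat.exists_prime_and_dvd hden
  have : Fact p.Prime := ⟨hp⟩
  have : IsIntegral (Rat.padicValuation p).integer W := isIntegral_padicValuation_integer p W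
  have hx : 1 < Rat.padicValuation p x := by
    rw [← not_le, Rat.padicValuation_le_one_iff]
    exact not_not_intro hdvd
  refine not_isOfFinAddOrder_some h hx (fun q hq ↦ ?_) hfin
  rcases eq_or_ne q p with rfl | hqp
  · exact one_lt_padicValuation_self_mul h.1 hx
  · rwa [padicValuation_natCast_eq_one hq hqp, one_mul]

end Rat

theorem stmt16 :
    ∃ P : (WeierstrassCurve.mk 0 0 0 (-21151030877616) 31685265497576201600 : WeierstrassCurve ℚ).toAffine.Point,
      ∀ n : ℕ, 0 < n → n • P ≠ 0 := by
  let W : Affine ℚ := WeierstrassCurve.mk 0 0 0 (-21151030877616) 31685265497576201600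
  have : W.IsCharNeTwoNF := ⟨rfl, rfl⟩
  have : IsIntegral ℤ W :=
    ⟨⟨0, 0, 0, -21151030877616, 31685265497576201600⟩, by ext <;> simp [W]⟩
  have hP : W.Nonsingular (6008706700 / 1681) (91230882238080 / 68921) := by
    rw [Affine.nonsingular_iff, Affine.equation_iff]
    norm_num [W]
  refine ⟨.some _ _ hP, fun n hn h₀ ↦ ?_⟩
  have hden := den_abscissa_eq_one_of_isOfFinAddOrder
    (isOfFinAddOrder_iff_nsmul_eq_zero.mpr ⟨n, hn, h₀⟩)
  norm_num at hden
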